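/- In the Leech polarization setup, if there exists an offender (w,x,y,z) with ⟪w,w⟫ = 4, then there exists a super offender, i.e. an offender (w',x',y',z') with ⟪w',w'⟫ = 4 whose multiset of norms {⟪x',x'⟫, ⟪y',y'⟫, ⟪z',z'⟫} equals {6,6,4}. -/

import Mathlib

noncomputable section

open scoped RealInnerProductSpace Pointwise
open Module

variable {V : Type*} [NormedAddCommGroup V] [InnerProductSpace ℝ V]

/-- `L` is a (full) lattice in `V`: a finitely generated `ℤ`-submodule spanning `V` over `ℝ`. -/
def IsLat (L : Submodule ℤ V) : Prop :=
  L.FG ∧ Submodule.span ℝ (L : Set V) = ⊤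

/-- The lattice `L` is integral: all inner products of lattice vectors are integers. -/
def IsIntegralLat (L : Submodule ℤ V) : Prop :=
  ∀ x ∈ L, ∀ y ∈ L, ∃ n : ℤ, ⟪x, y⟫ = (n : ℝ)

/-- The lattice `L` is even: it is integral and all norms are even integers. -/
def IsEvenLat (L : Submodule ℤ V) : Prop :=
  IsIntegralLat L ∧ ∀ x ∈ L, ∃ n : ℤ, ⟪x, x⟫ = 2 * (n : ℝ)

/-- The lattice `L` is unimodular: the Gram matrix of some `ℤ`-basis has determinant 1. -/
def IsUnimodularLat (L : Submodule ℤ V) : Prop :=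
  ∃ (n : ℕ) (b : Basis (Fin n) ℤ L),
    (Matrix.of fun i j : Fin n => ⟪(b i : V), (b j : V)⟫).det = 1

/-- The minimum norm `μ(L)` of a lattice. -/
def minNorm (L : Submodule ℤ V) : ℝ :=
  sInf {r : ℝ | ∃ x ∈ L, x ≠ 0 ∧ ⟪x, x⟫ = r}

/-- `√2·Υ` is an even unimodular lattice: all norms of `Υ` are integers, all doubled inner
products are integers, and the Gram matrix of the form `2⟪·,·⟫` on a `ℤ`-basis of `Υ` has
determinant 1. -/
def SqrtTwoEvenUnimod (Υ : Submodule ℤ V) : Prop :=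
  (∀ x ∈ Υ, ∃ n : ℤ, ⟪x, x⟫ = (n : ℝ)) ∧
  (∀ x ∈ Υ, ∀ y ∈ Υ, ∃ n : ℤ, 2 * ⟪x, y⟫ = (n : ℝ)) ∧
  ∃ (n : ℕ) (b : Basis (Fin n) ℤ Υ),
    (Matrix.of fun i j : Fin n => 2 * ⟪(b i : V), (b j : V)⟫).det = 1

/-- `M, N` is a polarization of `Υ`: a pair of integral sublattices with
`M + N = Υ` and `M ∩ N = 2Υ`. -/
def IsPolarization (Υ M N : Submodule ℤ V) : Prop :=
  M ≤ Υ ∧ N ≤ Υ ∧ IsIntegralLat M ∧ IsIntegralLat N ∧ M ⊔ N = Υ ∧ M ⊓ N = (2 : ℤ) • Υ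

/-- The sublattice `L_M = {(x_1,…,x_k) ∈ M^k : x_1+⋯+x_k ∈ M ∩ N}` of `V^k`. -/
def LsubM (M N : Submodule ℤ V) (k : ℕ) : Submodule ℤ (PiLp 2 fun _ : Fin k => V) where
  carrier := {v | (∀ i, v i ∈ M) ∧ (∑ i, v i) ∈ M ⊓ N}
  add_mem' := fun {a b} ha hb =>
    ⟨fun i => M.add_mem (ha.1 i) (hb.1 i), by
      have h : (∑ i, (a + b) i) = (∑ i, a i) + ∑ i, b i :=
        (Finset.sum_congr rfl fun i _ => rfl).trans Finset.sum_add_distrib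
      rw [h]; exact (M ⊓ N).add_mem ha.2 hb.2⟩
  zero_mem' := ⟨fun _ => M.zero_mem, by
      have h : (∑ i : Fin k, (0 : PiLp 2 fun _ : Fin k => V) i) = 0 :=
        Finset.sum_eq_zero fun _ _ => rfl
      rw [h]; exact (M ⊓ N).zero_mem⟩
  smul_mem' := fun c a ha =>
    ⟨fun i => M.smul_mem c (ha.1 i), by
      have h : (∑ i, (c • a) i) = c • ∑ i, a i := by
        show (∑ i, c • a i) = c • ∑ i, a i
        exact Finset.smul_sum.symm
      rw [h]; exact (M ⊓ N).smul_mem c ha.2⟩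

/-- The diagonal sublattice `L^N = {(y,…,y) : y ∈ N}` of `V^k`. -/
def LsupN (N : Submodule ℤ V) (k : ℕ) : Submodule ℤ (PiLp 2 fun _ : Fin k => V) where
  carrier := {v | ∃ y ∈ N, ∀ i, v i = y}
  add_mem' := fun {a b} ha hb => by
    obtain ⟨ya, hya, ha⟩ := ha
    obtain ⟨yb, hyb, hb⟩ := hb
    exact ⟨ya + yb, N.add_mem hya hyb, fun i => by
      show a i + b i = ya + yb
      rw [ha i, hb i]⟩
  zero_mem' := ⟨0, N.zero_mem, fun _ => rfl⟩
  smul_mem' := fun c a ha => by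
    obtain ⟨y, hy, h⟩ := ha
    exact ⟨c • y, N.smul_mem c hy, fun i => by
      show c • a i = c • y
      rw [h i]⟩

/-- The lattice `L(M,N,k) = L_M + L^N ⊆ V^k`. -/
def LMN (M N : Submodule ℤ V) (k : ℕ) : Submodule ℤ (PiLp 2 fun _ : Fin k => V) :=
  LsubM M N k ⊔ LsupN N k

/-- The Leech polarization setup: `V` is 24-dimensional, `√2·Υ` is even unimodular with
minimum norm 4, and `M, N` is a polarization of `Υ` by two copies of the Leech lattice. -/
def LeechSetup (Υ M N : Submodule ℤ V) : Prop :=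
  Module.finrank ℝ V = 24 ∧ IsLat Υ ∧ SqrtTwoEvenUnimod Υ ∧
  (∀ v ∈ Υ, v ≠ 0 → 4 ≤ 2 * ⟪v, v⟫) ∧
  IsPolarization Υ M N ∧
  IsLat M ∧ IsEvenLat M ∧ IsUnimodularLat M ∧ minNorm M = 4 ∧
  IsLat N ∧ IsEvenLat N ∧ IsUnimodularLat N ∧ minNorm N = 4

/-- `(w,x,y,z) ∈ N × M × M × M` is admissible if `x + y + z ∈ M ∩ N`. -/
def Admissible (M N : Submodule ℤ V) (w x y z : V) : Prop :=
  w ∈ N ∧ x ∈ M ∧ y ∈ M ∧ z ∈ M ∧ x + y + z ∈ M ⊓ N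

/-- An offender is an admissible quadruple all three of whose associated vectors
`w+x, w+y, w+z` have norm 2. -/
def Offender (M N : Submodule ℤ V) (w x y z : V) : Prop :=
  Admissible M N w x y z ∧
  ⟪w + x, w + x⟫ = 2 ∧ ⟪w + y, w + y⟫ = 2 ∧ ⟪w + z, w + z⟫ = 2

/-- A super offender is an offender with `⟪w,w⟫ = 4` whose multiset of norms
`{⟪x,x⟫, ⟪y,y⟫, ⟪z,z⟫}` equals `{6,6,4}`. -/
def SuperOffender (M N : Submodule ℤ V) (w x y z : V) : Prop :=
  Offender M N w x y z ∧ ⟪w, w⟫ = 4 ∧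
  ({⟪x, x⟫, ⟪y, y⟫, ⟪z, z⟫} : Multiset ℝ) = ({6, 6, 4} : Multiset ℝ)

/-!
A vector of norm 4 in `Υ` is shortest in its class modulo `2Υ`, and norms in a class modulo `2Υ`
have the same parity. The vectors `a = w + x`, `b = w + y`, `c = w + z` of an offender have norm 2,
lie in `w + M`, and satisfy `±a ± b ± c ≡ w` modulo `2Υ` for every choice of signs. So
`v = ±a ± b ± c` has even norm at least 4. Norm 4 is impossible: `M` has minimum norm 4, so each
of `±a`, `±b`, `±c` would have inner product at most 1 with `v`, giving `⟪v, v⟫ ≤ 3`. Hence all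
these norms are at least 6, and as they average to 6 they are all equal to 6.

Signs can be chosen so that `⟪a, w⟫`, `⟪b, w⟫`, `⟪c, w⟫` are nonnegative, and then they are 0 or 1.
With `s` their sum, `a + b + c - w ∈ 2Υ` is nonzero of norm `10 - 2 * s`, which is at least 8 and
divisible by 4; so `s = 1`, and `⟪x, x⟫ = 6 - 2 * ⟪a, w⟫` gives the norms `6, 6, 4`.
-/

theorem minNorm_le_inner_self {L : Submodule ℤ V} {x : V} (hx : x ∈ L) (h0 : x ≠ 0) :
    minNorm L ≤ ⟪x, x⟫ := by
  refine csInf_le ⟨0, ?_⟩ ⟨x, hx, h0, rfl⟩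
  rintro _ ⟨y, -, -, rfl⟩
  exact real_inner_self_nonneg

theorem le_minNorm {L : Submodule ℤ V} {μ : ℝ} (hL : L ≠ ⊥)
    (h : ∀ x ∈ L, x ≠ 0 → μ ≤ ⟪x, x⟫) : μ ≤ minNorm L := by
  obtain ⟨x, hx, h0⟩ := L.ne_bot_iff.mp hL
  refine le_csInf ⟨_, x, hx, h0, rfl⟩ ?_
  rintro _ ⟨y, hy, hy0, rfl⟩
  exact h y hy hy0

theorem two_mul_inner_le_sub_minNorm {L : Submodule ℤ V} {u v : V} (h : u - v ∈ L) (hne : u ≠ v) :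
    2 * ⟪u, v⟫ ≤ ⟪u, u⟫ + ⟪v, v⟫ - minNorm L := by
  have hmin := minNorm_le_inner_self h (sub_ne_zero.mpr hne)
  rw [real_inner_sub_sub_self] at hmin
  linarith

theorem inner_self_signed_sums (a b c : V) :
    ⟪a + b + c, a + b + c⟫ + ⟪-a + b + c, -a + b + c⟫ + ⟪a + -b + c, a + -b + c⟫
      + ⟪a + b + -c, a + b + -c⟫ = 4 * (⟪a, a⟫ + ⟪b, b⟫ + ⟪c, c⟫) := by
  simp only [inner_add_left, inner_add_right, inner_neg_left, inner_neg_right]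
  ring

theorem inner_self_two_zsmul (u : V) : ⟪(2 : ℤ) • u, (2 : ℤ) • u⟫ = 4 * ⟪u, u⟫ := by
  rw [two_zsmul, real_inner_add_add_self]
  ring

section ModTwo

variable {L : Submodule ℤ V} {u v d : V}

theorem four_mul_minNorm_le_inner_self_of_mem_two_smul (hd : d ∈ (2 : ℤ) • L) (h0 : d ≠ 0) :
    4 * minNorm L ≤ ⟪d, d⟫ := by
  obtain ⟨t, ht, rfl⟩ := (Submodule.mem_smul_pointwise_iff_exists ..).mp hd
  rw [inner_self_two_zsmul]
  gcongr
  exact minNorm_le_inner_self ht (right_ne_zero_of_smul h0)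

theorem exists_inner_self_eq_four_mul_of_mem_two_smul
    (hnorm : ∀ t ∈ L, ∃ n : ℤ, ⟪t, t⟫ = n) (hd : d ∈ (2 : ℤ) • L) :
    ∃ n : ℤ, ⟪d, d⟫ = 4 * n := by
  obtain ⟨t, ht, rfl⟩ := (Submodule.mem_smul_pointwise_iff_exists ..).mp hd
  obtain ⟨n, hn⟩ := hnorm t ht
  exact ⟨n, by rw [inner_self_two_zsmul, hn]⟩

theorem exists_inner_self_sub_inner_self_eq_two_mul_of_sub_mem_two_smul
    (hnorm : ∀ t ∈ L, ∃ n : ℤ, ⟪t, t⟫ = n) (hv : v ∈ L) (h : u - v ∈ (2 : ℤ) • L) :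
    ∃ n : ℤ, ⟪u, u⟫ - ⟪v, v⟫ = 2 * n := by
  obtain ⟨t, ht, htuv⟩ := (Submodule.mem_smul_pointwise_iff_exists ..).mp h
  obtain rfl : u = v + t + t := by rw [add_assoc, ← two_zsmul, htuv, add_sub_cancel]
  obtain ⟨k, hk⟩ := hnorm _ (L.add_mem hv ht)
  obtain ⟨l, hl⟩ := hnorm v hv
  obtain ⟨m, hm⟩ := hnorm t ht
  refine ⟨k - l + m, ?_⟩
  push_cast
  rw [← hk, ← hl, ← hm]
  simp only [inner_add_left, inner_add_right]
  ring

theorem four_mul_minNorm_le_inner_self_add_inner_self (hv : v ∈ L) (h : u - v ∈ (2 : ℤ) • L)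
    (hne : u ≠ v) (hne' : u ≠ -v) : 4 * minNorm L ≤ ⟪u, u⟫ + ⟪v, v⟫ := by
  have hadd : u + v ∈ (2 : ℤ) • L := by
    convert add_mem h (Submodule.smul_mem_pointwise_smul v (2 : ℤ) L hv) using 1
    module
  have hsub_norm := four_mul_minNorm_le_inner_self_of_mem_two_smul h (sub_ne_zero.mpr hne)
  have hadd_norm := four_mul_minNorm_le_inner_self_of_mem_two_smul hadd
    (mt eq_neg_of_add_eq_zero_left hne')
  rw [real_inner_sub_sub_self] at hsub_norm
  rw [real_inner_add_add_self] at hadd_norm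
  linarith

theorem inner_self_le_inner_self_of_sub_mem_two_smul (hv : v ∈ L)
    (hmin : ⟪v, v⟫ ≤ 2 * minNorm L) (h : u - v ∈ (2 : ℤ) • L) : ⟪v, v⟫ ≤ ⟪u, u⟫ := by
  by_cases hne : u = v
  · rw [hne]
  by_cases hne' : u = -v
  · rw [hne', inner_neg_neg]
  linarith [four_mul_minNorm_le_inner_self_add_inner_self hv h hne hne']

end ModTwo

/-- `a` is a root (a vector of norm 2) in the coset `w + M`. The vectors `w + x`, `w + y`, `w + z`
attached to an offender `(w, x, y, z)` are of this kind. -/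
structure IsCosetRoot (M : Submodule ℤ V) (w a : V) : Prop where
  inner_self : ⟪a, a⟫ = 2
  sub_mem : a - w ∈ M

namespace IsCosetRoot

variable {M : Submodule ℤ V} {w a v : V}

theorem neg (ha : IsCosetRoot M w a) (hw : (2 : ℤ) • w ∈ M) : IsCosetRoot M w (-a) where
  inner_self := by rw [inner_neg_neg, ha.inner_self]
  sub_mem := by
    convert M.neg_mem (M.add_mem ha.sub_mem hw) using 1
    module

theorem inner_le_one (ha : IsCosetRoot M w a) (hM : 4 ≤ minNorm M) (hv : v - w ∈ M)
    (hv4 : ⟪v, v⟫ = 4) : ⟪a, v⟫ ≤ 1 := by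
  have hav : a - v ∈ M := by simpa using M.sub_mem ha.sub_mem hv
  have hne : a ≠ v := by
    rintro rfl
    linarith [ha.inner_self]
  linarith [two_mul_inner_le_sub_minNorm hav hne, ha.inner_self]

theorem inner_self_sub (ha : IsCosetRoot M w a) (hw : ⟪w, w⟫ = 4) :
    ⟪a - w, a - w⟫ = 6 - 2 * ⟪a, w⟫ := by
  rw [real_inner_sub_sub_self, ha.inner_self, hw]
  ring

theorem inner_eq_zero_or_one (ha : IsCosetRoot M w a) (hM : 4 ≤ minNorm M)
    (heven : ∀ x ∈ M, ∃ n : ℤ, ⟪x, x⟫ = 2 * n) (hw : ⟪w, w⟫ = 4) (h0 : 0 ≤ ⟪a, w⟫) :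
    ⟪a, w⟫ = 0 ∨ ⟪a, w⟫ = 1 := by
  obtain ⟨n, hn⟩ := heven _ ha.sub_mem
  have inner_eq : ⟪a, w⟫ = (3 - n : ℤ) := by
    push_cast
    linarith [ha.inner_self_sub hw]
  have h1 : ⟪a, w⟫ ≤ 1 := ha.inner_le_one hM (by simp) hw
  rw [inner_eq] at h0 h1 ⊢
  norm_cast at h0 h1 ⊢
  lia

end IsCosetRoot

/-- Three roots of the coset `w + M` whose sum is congruent to `w` modulo `2Υ`. When
`M ⊓ N = 2Υ` and `w ∈ N`, these are the vectors `w + x`, `w + y`, `w + z` of the offenders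
`(w, x, y, z)`; this form makes the symmetry under sign changes visible. -/
structure OffendingRoots (Υ M : Submodule ℤ V) (w a b c : V) : Prop where
  fst : IsCosetRoot M w a
  snd : IsCosetRoot M w b
  thd : IsCosetRoot M w c
  sum_sub_mem : a + b + c - w ∈ (2 : ℤ) • Υ

theorem offender_iff_offendingRoots {Υ M N : Submodule ℤ V} (hNΥ : N ≤ Υ)
    (hMN : M ⊓ N = (2 : ℤ) • Υ) {w x y z : V} :
    Offender M N w x y z ↔ w ∈ N ∧ OffendingRoots Υ M w (w + x) (w + y) (w + z) := by
  have mem_iff (hw : w ∈ N) :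
      w + x + (w + y) + (w + z) - w ∈ (2 : ℤ) • Υ ↔ x + y + z ∈ (2 : ℤ) • Υ := by
    rw [← add_mem_cancel_right (Submodule.smul_mem_pointwise_smul w (2 : ℤ) Υ (hNΥ hw))
      (y := x + y + z)]
    congr! 1
    module
  constructor
  · rintro ⟨⟨hw, hx, hy, hz, hsum⟩, hx2, hy2, hz2⟩
    exact ⟨hw, ⟨hx2, by simpa using hx⟩, ⟨hy2, by simpa using hy⟩, ⟨hz2, by simpa using hz⟩,
      (mem_iff hw).mpr (hMN ▸ hsum)⟩
  · rintro ⟨hw, ⟨hx2, hx⟩, ⟨hy2, hy⟩, ⟨hz2, hz⟩, hsum⟩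
    rw [add_sub_cancel_left] at hx hy hz
    exact ⟨⟨hw, hx, hy, hz, hMN ▸ (mem_iff hw).mp hsum⟩, hx2, hy2, hz2⟩

namespace OffendingRoots

variable {Υ M : Submodule ℤ V} {w a b c : V}

theorem rotate (h : OffendingRoots Υ M w a b c) : OffendingRoots Υ M w b c a where
  fst := h.snd
  snd := h.thd
  thd := h.fst
  sum_sub_mem := by
    convert h.sum_sub_mem using 1
    module

theorem neg_fst (h : OffendingRoots Υ M w a b c) (hMΥ : M ≤ Υ) (hΥM : (2 : ℤ) • Υ ≤ M)
    (hwΥ : w ∈ Υ) : OffendingRoots Υ M w (-a) b c where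
  fst := h.fst.neg (hΥM (Submodule.smul_mem_pointwise_smul w (2 : ℤ) Υ hwΥ))
  snd := h.snd
  thd := h.thd
  sum_sub_mem := by
    have ha : a ∈ Υ := by simpa using Υ.add_mem (hMΥ h.fst.sub_mem) hwΥ
    convert sub_mem h.sum_sub_mem (Submodule.smul_mem_pointwise_smul a (2 : ℤ) Υ ha) using 1
    module

theorem exists_nonneg_fst (h : OffendingRoots Υ M w a b c) (hMΥ : M ≤ Υ)
    (hΥM : (2 : ℤ) • Υ ≤ M) (hwΥ : w ∈ Υ) :
    ∃ a', OffendingRoots Υ M w a' b c ∧ 0 ≤ ⟪a', w⟫ := by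
  rcases le_total 0 ⟪a, w⟫ with ha | ha
  · exact ⟨a, h, ha⟩
  · exact ⟨-a, h.neg_fst hMΥ hΥM hwΥ, by simpa using ha⟩

theorem exists_nonneg (h : OffendingRoots Υ M w a b c) (hMΥ : M ≤ Υ) (hΥM : (2 : ℤ) • Υ ≤ M)
    (hwΥ : w ∈ Υ) :
    ∃ a' b' c', OffendingRoots Υ M w a' b' c' ∧ 0 ≤ ⟪a', w⟫ ∧ 0 ≤ ⟪b', w⟫ ∧ 0 ≤ ⟪c', w⟫ := by
  obtain ⟨a', h, ha⟩ := h.exists_nonneg_fst hMΥ hΥM hwΥ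
  obtain ⟨b', h, hb⟩ := h.rotate.exists_nonneg_fst hMΥ hΥM hwΥ
  obtain ⟨c', h, hc⟩ := h.rotate.exists_nonneg_fst hMΥ hΥM hwΥ
  exact ⟨a', b', c', h.rotate, ha, hb, hc⟩

theorem inner_self_sum_ne_four (h : OffendingRoots Υ M w a b c) (hΥM : (2 : ℤ) • Υ ≤ M)
    (hM : 4 ≤ minNorm M) : ⟪a + b + c, a + b + c⟫ ≠ 4 := by
  intro h4
  have hvM : a + b + c - w ∈ M := hΥM h.sum_sub_mem
  have expand : ⟪a + b + c, a + b + c⟫ =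
      ⟪a, a + b + c⟫ + ⟪b, a + b + c⟫ + ⟪c, a + b + c⟫ := by
    rw [inner_add_left, inner_add_left]
  linarith [h.fst.inner_le_one hM hvM h4, h.snd.inner_le_one hM hvM h4,
    h.thd.inner_le_one hM hvM h4]

theorem six_le_inner_self_sum (h : OffendingRoots Υ M w a b c) (hΥM : (2 : ℤ) • Υ ≤ M)
    (hnorm : ∀ v ∈ Υ, ∃ n : ℤ, ⟪v, v⟫ = n) (hΥ : 2 ≤ minNorm Υ) (hM : 4 ≤ minNorm M)
    (hwΥ : w ∈ Υ) (hw : ⟪w, w⟫ = 4) : 6 ≤ ⟪a + b + c, a + b + c⟫ := by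
  have four_le : ⟪w, w⟫ ≤ ⟪a + b + c, a + b + c⟫ :=
    inner_self_le_inner_self_of_sub_mem_two_smul hwΥ (by linarith) h.sum_sub_mem
  have ne_four := h.inner_self_sum_ne_four hΥM hM
  obtain ⟨n, hn⟩ :=
    exists_inner_self_sub_inner_self_eq_two_mul_of_sub_mem_two_smul hnorm hwΥ h.sum_sub_mem
  have hv : ⟪a + b + c, a + b + c⟫ = (4 + 2 * n : ℤ) := by
    push_cast
    linarith
  rw [hw, hv] at four_le
  rw [hv] at ne_four ⊢
  norm_cast at four_le ne_four ⊢
  lia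

theorem inner_self_sum_eq_six (h : OffendingRoots Υ M w a b c) (hMΥ : M ≤ Υ)
    (hΥM : (2 : ℤ) • Υ ≤ M) (hnorm : ∀ v ∈ Υ, ∃ n : ℤ, ⟪v, v⟫ = n) (hΥ : 2 ≤ minNorm Υ)
    (hM : 4 ≤ minNorm M) (hwΥ : w ∈ Υ) (hw : ⟪w, w⟫ = 4) :
    ⟪a + b + c, a + b + c⟫ = 6 := by
  have six_le {a b c : V} (h : OffendingRoots Υ M w a b c) : 6 ≤ ⟪a + b + c, a + b + c⟫ :=
    h.six_le_inner_self_sum hΥM hnorm hΥ hM hwΥ hw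
  have neg_fst := h.neg_fst hMΥ hΥM hwΥ
  have neg_snd := (h.rotate.neg_fst hMΥ hΥM hwΥ).rotate.rotate
  have neg_thd := (h.rotate.rotate.neg_fst hMΥ hΥM hwΥ).rotate
  linarith [six_le h, six_le neg_fst, six_le neg_snd, six_le neg_thd,
    inner_self_signed_sums a b c, h.fst.inner_self, h.snd.inner_self, h.thd.inner_self]

theorem sum_inner_eq_one (h : OffendingRoots Υ M w a b c)
    (hnorm : ∀ v ∈ Υ, ∃ n : ℤ, ⟪v, v⟫ = n) (hΥ : 2 ≤ minNorm Υ) (hw : ⟪w, w⟫ = 4)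
    (hsum : ⟪a + b + c, a + b + c⟫ = 6)
    (ha : 0 ≤ ⟪a, w⟫) (hb : 0 ≤ ⟪b, w⟫) (hc : 0 ≤ ⟪c, w⟫) :
    ⟪a, w⟫ + ⟪b, w⟫ + ⟪c, w⟫ = 1 := by
  have norm_sub : ⟪a + b + c - w, a + b + c - w⟫ = 10 - 2 * (⟪a, w⟫ + ⟪b, w⟫ + ⟪c, w⟫) := by
    rw [real_inner_sub_sub_self, hsum, hw, inner_add_left, inner_add_left]
    ring
  have ne_zero : a + b + c - w ≠ 0 := by
    rw [sub_ne_zero]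
    intro heq
    rw [heq] at hsum
    linarith
  have eight_le := four_mul_minNorm_le_inner_self_of_mem_two_smul h.sum_sub_mem ne_zero
  obtain ⟨n, hn⟩ := exists_inner_self_eq_four_mul_of_mem_two_smul hnorm h.sum_sub_mem
  have hs : ⟪a, w⟫ + ⟪b, w⟫ + ⟪c, w⟫ = (5 - 2 * n : ℤ) := by
    push_cast
    linarith
  have h0 : 0 ≤ ⟪a, w⟫ + ⟪b, w⟫ + ⟪c, w⟫ := by positivity
  have h1 : ⟪a, w⟫ + ⟪b, w⟫ + ⟪c, w⟫ ≤ 1 := by linarith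
  rw [hs] at h0 h1 ⊢
  norm_cast at h0 h1 ⊢
  lia

end OffendingRoots

theorem multiset_six_sub_two_mul_eq {k l m : ℝ} (hk : k = 0 ∨ k = 1) (hl : l = 0 ∨ l = 1)
    (hm : m = 0 ∨ m = 1) (hsum : k + l + m = 1) :
    ({6 - 2 * k, 6 - 2 * l, 6 - 2 * m} : Multiset ℝ) = {6, 6, 4} := by
  have exactly_one : k = 0 ∧ l = 0 ∧ m = 1 ∨ k = 0 ∧ l = 1 ∧ m = 0 ∨ k = 1 ∧ l = 0 ∧ m = 0 := by
    grind
  have h4 : (6 - 2 * 1 : ℝ) = 4 := by norm_num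
  rcases exactly_one with ⟨rfl, rfl, rfl⟩ | ⟨rfl, rfl, rfl⟩ | ⟨rfl, rfl, rfl⟩ <;>
    simp only [mul_zero, sub_zero, h4, Multiset.insert_eq_cons]
  · rw [← Multiset.cons_zero, ← Multiset.cons_zero, Multiset.cons_swap 4 6]
  · rw [← Multiset.cons_zero, ← Multiset.cons_zero, Multiset.cons_swap 4 6,
      Multiset.cons_swap 4 6]

theorem statement15_general {Υ M N : Submodule ℤ V} (hMΥ : M ≤ Υ) (hNΥ : N ≤ Υ)
    (hMN : M ⊓ N = (2 : ℤ) • Υ) (hnorm : ∀ v ∈ Υ, ∃ n : ℤ, ⟪v, v⟫ = n) (hΥ : 2 ≤ minNorm Υ)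
    (heven : ∀ v ∈ M, ∃ n : ℤ, ⟪v, v⟫ = 2 * n) (hM : 4 ≤ minNorm M) {w x y z : V}
    (hoff : Offender M N w x y z) (hw : ⟪w, w⟫ = 4) :
    ∃ x' y' z' : V, SuperOffender M N w x' y' z' := by
  have hΥM : (2 : ℤ) • Υ ≤ M := hMN ▸ inf_le_left
  obtain ⟨hwN, roots⟩ := (offender_iff_offendingRoots hNΥ hMN).mp hoff
  obtain ⟨a, b, c, h, ha, hb, hc⟩ := roots.exists_nonneg hMΥ hΥM (hNΥ hwN)
  have sum_eq_one := h.sum_inner_eq_one hnorm hΥ hw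
    (h.inner_self_sum_eq_six hMΥ hΥM hnorm hΥ hM (hNΥ hwN) hw) ha hb hc
  have offender : Offender M N w (a - w) (b - w) (c - w) :=
    (offender_iff_offendingRoots hNΥ hMN).mpr ⟨hwN, by simpa using h⟩
  refine ⟨a - w, b - w, c - w, offender, hw, ?_⟩
  rw [h.fst.inner_self_sub hw, h.snd.inner_self_sub hw, h.thd.inner_self_sub hw]
  exact multiset_six_sub_two_mul_eq (h.fst.inner_eq_zero_or_one hM heven hw ha)
    (h.snd.inner_eq_zero_or_one hM heven hw hb) (h.thd.inner_eq_zero_or_one hM heven hw hc)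
    sum_eq_one

/-- if there is an offender with `⟪w,w⟫ = 4`, then there is a super
offender. -/
theorem statement15 (Υ M N : Submodule ℤ V) (h : LeechSetup Υ M N)
    (w x y z : V) (hoff : Offender M N w x y z) (hw : ⟪w, w⟫ = 4) :
    ∃ w' x' y' z' : V, SuperOffender M N w' x' y' z' := by
  obtain ⟨-, -, ⟨hnorm, -, -⟩, hΥ, ⟨hMΥ, hNΥ, -, -, -, hMN⟩, -, heven, -, hM, -⟩ := h
  have hΥ0 : Υ ≠ ⊥ := Υ.ne_bot_iff.mpr ⟨w, hNΥ hoff.1.1, by rintro rfl; simp at hw⟩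
  have hΥ2 : 2 ≤ minNorm Υ := le_minNorm hΥ0 fun v hv hv0 ↦ by linarith [hΥ v hv hv0]
  exact ⟨w, statement15_general hMΥ hNΥ hMN hnorm hΥ2 heven.2 hM.ge hoff hw⟩
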